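/- arXiv:1805.07817 — 8 statements merged into one kernel-verified Lean document; each statement's English description precedes it below -/
import Mathlib

section
/- Let (A,[ ]) be a ternary group. Then (A,[ ]) is a knot-theoretic ternary group (i.e., satisfies (A3L) and (A3R)) if and only if (A,[ ]) is semi-commutative and satisfies [abb] = ā for all a,b ∈ A (where ā denotes the skew element of a). In particular, in each knot-theoretic ternary group [ccc] = c̄ for every c ∈ A. -/
variable {A : Type*}

/-- Associativity of a ternary operation. -/
def TernaryAssoc (f : A → A → A → A) : Prop :=
  ∀ a b c d e : A,
    f (f a b c) d e = f a (f b c d) e ∧ f a (f b c d) e = f a b (f c d e)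

/-- Ternary quasigroup: unique solvability in each coordinate. -/
def TernaryQuasigroup (f : A → A → A → A) : Prop :=
  (∀ a b c : A, ∃! z : A, f z a b = c) ∧
  (∀ a b c : A, ∃! z : A, f a z b = c) ∧
  (∀ a b c : A, ∃! z : A, f a b z = c)

/-- A ternary group is an associative ternary quasigroup. -/
def TernaryGroup (f : A → A → A → A) : Prop :=
  TernaryAssoc f ∧ TernaryQuasigroup f

/-- The axiom (A3L). -/
def A3L (f : A → A → A → A) : Prop :=
  ∀ a b c d : A, f (f a b c) c d = f (f a b (f b c d)) (f b c d) d

/-- The axiom (A3R). -/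
def A3R (f : A → A → A → A) : Prop :=
  ∀ a b c d : A, f a b (f b c d) = f a (f a b c) (f (f a b c) c d)

/-- Semi-commutativity: [abc] = [cba]. -/
def SemiComm (f : A → A → A → A) : Prop :=
  ∀ a b c : A, f a b c = f c b a

/-- A knot-theoretic ternary group. -/
def KnotTheoretic (f : A → A → A → A) : Prop :=
  TernaryGroup f ∧ A3L f ∧ A3R f

/-- `sk` is a skew-element operation: [a (sk a) a] = a. -/
def IsSkew (f : A → A → A → A) (sk : A → A) : Prop :=
  ∀ a : A, f a (sk a) a = a

/-- Entropic (medial) ternary operation. -/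
def Entropic (f : A → A → A → A) : Prop :=
  ∀ a₁ a₂ a₃ b₁ b₂ b₃ c₁ c₂ c₃ : A,
    f (f a₁ a₂ a₃) (f b₁ b₂ b₃) (f c₁ c₂ c₃) = f (f a₁ b₁ c₁) (f a₂ b₂ c₂) (f a₃ b₃ c₃)

/-! Think of `[abc]` as the product of `a`, `b`, `c` in a covering group. After associativity and
cancellation, (A3L) says `c² = (bcd)²` and (A3R) says `b² = (abc)²`; as `[bcd]` and `[abc]` can be
made arbitrary by solving for `b` and `c`, each axiom says that all elements of `A` have the same
square `s`. Then `s = (aaa)² = s³`, so `s² = 1` and `[abb] = as = a⁻¹ = ā`; hence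
`(abc)(cba) = s³ = s = (abc)²`, which is semi-commutativity. -/

variable {f : A → A → A → A} {sk : A → A}

theorem TernaryAssoc.left_eq_middle (h : TernaryAssoc f) (a b c d e : A) :
    f (f a b c) d e = f a (f b c d) e :=
  (h a b c d e).1

theorem TernaryAssoc.middle_eq_right (h : TernaryAssoc f) (a b c d e : A) :
    f a (f b c d) e = f a b (f c d e) :=
  (h a b c d e).2

theorem TernaryAssoc.left_eq_right (h : TernaryAssoc f) (a b c d e : A) :
    f (f a b c) d e = f a b (f c d e) :=
  (h.left_eq_middle a b c d e).trans (h.middle_eq_right a b c d e)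

namespace TernaryQuasigroup

theorem exists_left (h : TernaryQuasigroup f) (a b c : A) : ∃ z, f z a b = c :=
  (h.1 a b c).exists

theorem exists_right (h : TernaryQuasigroup f) (a b c : A) : ∃ z, f a b z = c :=
  (h.2.2 a b c).exists

theorem left_inj (h : TernaryQuasigroup f) {a b x y : A} : f x a b = f y a b ↔ x = y :=
  ⟨fun hxy => (h.1 a b (f y a b)).unique hxy rfl, fun hxy => by rw [hxy]⟩

theorem middle_inj (h : TernaryQuasigroup f) {a b x y : A} : f a x b = f a y b ↔ x = y :=
  ⟨fun hxy => (h.2.1 a b (f a y b)).unique hxy rfl, fun hxy => by rw [hxy]⟩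

theorem right_inj (h : TernaryQuasigroup f) {a b x y : A} : f a b x = f a b y ↔ x = y :=
  ⟨fun hxy => (h.2.2 a b (f a b y)).unique hxy rfl, fun hxy => by rw [hxy]⟩

end TernaryQuasigroup

/-- All squares act alike from the left: `[aac]` does not depend on `a`. In a covering group this
says that all elements of `A` have the same square, expressed inside `A`, which has no binary
product. It is the common content of (A3L) and (A3R). -/
def LeftSquaresEq (f : A → A → A → A) : Prop :=
  ∀ a b c : A, f a a c = f b b c

/-- All squares act alike from the right: `[caa]` does not depend on `a`. This is the mirror image
of `LeftSquaresEq`, and the form in which (A3R) yields equality of squares. -/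
def RightSquaresEq (f : A → A → A → A) : Prop :=
  ∀ a b c : A, f c a a = f c b b

theorem SemiComm.leftSquaresEq (hc : SemiComm f) (hsq : ∀ a b : A, f a b b = sk a) :
    LeftSquaresEq f := fun a b c => by
  rw [hc a, hc b, hsq, hsq]

namespace TernaryGroup

theorem a3L_iff_leftSquaresEq (hG : TernaryGroup f) : A3L f ↔ LeftSquaresEq f := by
  obtain ⟨hA, hQ⟩ := hG
  refine ⟨fun h a b c => ?_, fun h a b c d => ?_⟩
  · obtain ⟨z, rfl⟩ := hQ.exists_left a c b
    have hz := h z z a c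
    rwa [hA.left_eq_right, hA.left_eq_right z z (f z a c), hQ.right_inj] at hz
  · rw [hA.left_eq_right, hA.left_eq_right a b (f b c d), h c (f b c d)]

theorem a3R_iff_rightSquaresEq (hG : TernaryGroup f) : A3R f ↔ RightSquaresEq f := by
  obtain ⟨hA, hQ⟩ := hG
  refine ⟨fun h a b c => ?_, fun h a b c d => ?_⟩
  · obtain ⟨z, rfl⟩ := hQ.exists_right c a b
    have hz := h c a z z
    rwa [← hA.left_eq_right, ← hA.left_eq_right, hQ.left_inj] at hz
  · rw [← hA.left_eq_right, ← hA.left_eq_right a (f a b c), h b (f a b c)]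

theorem leftSquaresEq_iff_rightSquaresEq (hG : TernaryGroup f) :
    LeftSquaresEq f ↔ RightSquaresEq f := by
  obtain ⟨hA, hQ⟩ := hG
  have move (a c d e : A) : f (f c a a) d e = f c (f a a d) e := hA.left_eq_middle c a a d e
  refine ⟨fun h a b c => ?_, fun h a b c => ?_⟩
  · rw [← hQ.left_inj (a := c) (b := c), move, move, h a b]
  · rw [← hQ.middle_inj (a := c) (b := c), ← move, ← move, h a b]

theorem apply_skew_self (hG : TernaryGroup f) (hsk : IsSkew f sk) (a b : A) :
    f a (sk b) b = a := by
  obtain ⟨z, rfl⟩ := hG.2.exists_left b b a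
  rw [hG.1.left_eq_right, hsk]

theorem eq_skew_iff (hG : TernaryGroup f) (hsk : IsSkew f sk) {a x : A} :
    x = sk a ↔ f a x a = a := by
  rw [← hG.2.middle_inj (a := a) (b := a), hsk]

end TernaryGroup

namespace LeftSquaresEq

theorem cube_eq_skew (hS : LeftSquaresEq f) (hG : TernaryGroup f) (hsk : IsSkew f sk) (a : A) :
    f a a a = sk a := by
  rw [hG.eq_skew_iff hsk, ← hG.2.right_inj (a := a) (b := a)]
  calc f a a (f a (f a a a) a)
      = f (f a a a) (f a a a) a := (hG.1.left_eq_right a a a (f a a a) a).symm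
    _ = f a a a := hS (f a a a) a a

theorem apply_square_eq_skew (hS : LeftSquaresEq f) (hG : TernaryGroup f) (hsk : IsSkew f sk)
    (a b : A) : f a b b = sk a :=
  (hG.leftSquaresEq_iff_rightSquaresEq.1 hS b a a).trans (hS.cube_eq_skew hG hsk a)

theorem semiComm (hS : LeftSquaresEq f) (hG : TernaryGroup f) (hsk : IsSkew f sk) :
    SemiComm f := fun a b c => by
  have ⟨hA, hQ⟩ := hG
  have key : f (f a b c) (f c b a) a = f (f a b c) (f a b c) a :=
    calc f (f a b c) (f c b a) a
        = f a (f b c c) (f b a a) := by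
          rw [hA.left_eq_right, hA.middle_eq_right c c b a a, ← hA.middle_eq_right a b c c]
      _ = f a (sk b) (f b a a) := by rw [hS.apply_square_eq_skew hG hsk]
      _ = f a a a := by rw [← hA.left_eq_right, hG.apply_skew_self hsk]
      _ = f (f a b c) (f a b c) a := hS a (f a b c) a
  exact (hQ.middle_inj.1 key).symm

end LeftSquaresEq

theorem TernaryGroup.leftSquaresEq_iff_semiComm_and_eq_skew (hG : TernaryGroup f)
    (hsk : IsSkew f sk) : LeftSquaresEq f ↔ SemiComm f ∧ ∀ a b : A, f a b b = sk a :=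
  ⟨fun hS => ⟨hS.semiComm hG hsk, hS.apply_square_eq_skew hG hsk⟩,
    fun ⟨hc, hsq⟩ => hc.leftSquaresEq hsq⟩

theorem stmt0_general (f : A → A → A → A) (hG : TernaryGroup f)
    (sk : A → A) (hsk : IsSkew f sk) :
    (A3L f ↔ SemiComm f ∧ ∀ a b : A, f a b b = sk a) ∧
    (A3R f ↔ SemiComm f ∧ ∀ a b : A, f a b b = sk a) := by
  have hS := hG.leftSquaresEq_iff_semiComm_and_eq_skew hsk
  exact ⟨hG.a3L_iff_leftSquaresEq.trans hS,
    hG.a3R_iff_rightSquaresEq.trans (hG.leftSquaresEq_iff_rightSquaresEq.symm.trans hS)⟩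

/-- A ternary group is knot-theoretic iff it is semi-commutative and
satisfies [abb] = ā; in particular, in each knot-theoretic ternary group [ccc] = c̄. -/
theorem stmt0 (f : A → A → A → A) (hG : TernaryGroup f)
    (sk : A → A) (hsk : IsSkew f sk) :
    ((A3L f ∧ A3R f) ↔ (SemiComm f ∧ ∀ a b : A, f a b b = sk a)) ∧
    ((A3L f ∧ A3R f) → ∀ c : A, f c c c = sk c) := by
  obtain ⟨hL, hR⟩ := stmt0_general f hG sk hsk
  exact ⟨by rw [hL, hR, and_self], fun hK c => (hL.1 hK.1).2 c c⟩
end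

section
/- Let (A₁,+₁) and (A₂,+₂) be abelian groups, let a ∈ A₁ with a+a = 0 and b ∈ A₂ with b+b = 0, and define the knot-theoretic ternary operations [xyz]₁ = x −₁ y +₁ z +₁ a on A₁ and [xyz]₂ = x −₂ y +₂ z +₂ b on A₂. Then there exists a bijection h : A₁ → A₂ with h([xyz]₁) = [h(x)h(y)h(z)]₂ for all x,y,z ∈ A₁ if and only if there exists a group isomorphism h : (A₁,+₁) → (A₂,+₂) with h(a) = b. -/
variable {A : Type*}

/-!
Cancelling the constants `a` and `b` from a homomorphism of the operations `[xyz] = x - y + z + a`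
leaves a map compatible with `x - y + z`, which becomes additive once translated to fix `0`.
The translate has to be taken on the left, by `-f 0`, for `a` to go to `b` itself rather than to a
conjugate of `b` when the target group is not commutative.
-/

section TernaryHom

variable {G H : Type*} [AddGroup G] [AddGroup H] {a : G} {b : H}

/-- `f` is a homomorphism of ternary operations from `[xyz] = x - y + z + a` on `G` to
`[xyz] = x - y + z + b` on `H`; the ternary structures are encoded by their constants `a` and
`b`. -/
def IsTernaryHom (a : G) (b : H) (f : G → H) : Prop :=
  ∀ x y z : G, f (x - y + z + a) = f x - f y + f z + b

theorem isTernaryHom_of_map_eq (φ : G →+ H) (hφ : φ a = b) : IsTernaryHom a b φ := by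
  intro x y z
  rw [map_add, map_add, map_sub, hφ]

namespace IsTernaryHom

variable {f : G → H}

theorem map_add_const (hf : IsTernaryHom a b f) (x : G) : f (x + a) = f x + b := by
  simpa using hf x 0 0

theorem map_sub_add (hf : IsTernaryHom a b f) (x y z : G) :
    f (x - y + z) = f x - f y + f z :=
  add_right_cancel ((hf.map_add_const _).symm.trans (hf x y z))

/-- The additive homomorphism `x ↦ -f 0 + f x` underlying a ternary homomorphism `f`, obtained by
translating `f` to fix `0`. -/
def toAddMonoidHom (hf : IsTernaryHom a b f) : G →+ H :=
  AddMonoidHom.mk' (fun x ↦ -f 0 + f x) fun x y ↦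
    calc -f 0 + f (x + y) = -f 0 + (f x - f 0 + f y) := by rw [← hf.map_sub_add, sub_zero]
      _ = -f 0 + f x + (-f 0 + f y) := by simp only [sub_eq_add_neg, add_assoc]

theorem toAddMonoidHom_const (hf : IsTernaryHom a b f) : hf.toAddMonoidHom a = b :=
  calc -f 0 + f a = -f 0 + (f 0 + b) := by rw [← hf.map_add_const, zero_add]
    _ = b := neg_add_cancel_left _ _

theorem toAddMonoidHom_bijective (hf : IsTernaryHom a b f) (hbij : Function.Bijective f) :
    Function.Bijective hf.toAddMonoidHom :=
  (Equiv.addLeft (-f 0)).bijective.comp hbij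

end IsTernaryHom

end TernaryHom

theorem stmt2_general {A₁ A₂ : Type*} [AddGroup A₁] [AddGroup A₂] (a : A₁) (b : A₂) :
    (∃ h : A₁ ≃ A₂, ∀ x y z : A₁,
        h (x - y + z + a) = h x - h y + h z + b) ↔
    (∃ h : A₁ ≃+ A₂, h a = b) := by
  constructor
  · rintro ⟨h, hh⟩
    have hom : IsTernaryHom a b h := hh
    exact ⟨AddEquiv.ofBijective hom.toAddMonoidHom (hom.toAddMonoidHom_bijective h.bijective),
      hom.toAddMonoidHom_const⟩
  · rintro ⟨h, hab⟩
    exact ⟨h.toEquiv, isTernaryHom_of_map_eq h.toAddMonoidHom hab⟩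

/-- Two knot-theoretic ternary groups T((A₁,+),a) and T((A₂,+),b) are
isomorphic as ternary groups iff there is a group isomorphism h with h(a) = b. -/
theorem stmt2 {A₁ A₂ : Type*} [AddCommGroup A₁] [AddCommGroup A₂]
    (a : A₁) (b : A₂) (ha : a + a = 0) (hb : b + b = 0) :
    (∃ h : A₁ ≃ A₂, ∀ x y z : A₁,
        h (x - y + z + a) = h x - h y + h z + b) ↔
    (∃ h : A₁ ≃+ A₂, h a = b) :=
  stmt2_general a b
end

section
/- A ternary groupoid (A,[ ]) is a knot-theoretic ternary group if and only if it satisfies, for all a,b,c,d,e ∈ A, the exchange conditions (a1): [[abc]de]=[[adc]be] and (a2): [a[bcd]e]=[a[bed]c], and there exists a unary operation x ↦ x̄ on A such that [abb] = ā and [āax] = [xaā] = x for all a,b,x ∈ A. -/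
variable {A : Type*}

/-!
The nonempty models of both descriptions are the operations `[abc] = a - b + c + k` on an abelian
group with `2k = 0`, where the skew element is `ā = a + k`.

In a ternary group, (A3L) says exactly that `[ccd]` does not depend on `c`, and (A3R) that `[abb]`
does not depend on `b`. Semi-commutativity follows because `[[bcd][dcb]b] = [[bcd][bcd]b]`, and
given associativity it yields the exchange conditions. As `[aāx] = x` for all `x`, the constant
value of `[abb]` is `[aāā] = ā`.

Conversely, the exchange conditions bring the two letters `c` of `[[abc]cd]` next to each other,
so that `[[abc]cd]` is the skew element of `[abd]`. Hence skewing one letter skews the whole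
product, and the translations get explicit inverses such as `[[abc]cb] = a`; substituting this
expression for `a` in `[a[bcd]e]` yields associativity.
-/

theorem ternaryQuasigroup_iff_bijective {f : A → A → A → A} :
    TernaryQuasigroup f ↔
      (∀ a b, Function.Bijective fun z ↦ f z a b) ∧
      (∀ a b, Function.Bijective fun z ↦ f a z b) ∧
      ∀ a b, Function.Bijective fun z ↦ f a b z := by
  simp only [TernaryQuasigroup, Function.bijective_iff_existsUnique]

namespace TernaryQuasigroup

variable {f : A → A → A → A}

theorem bijective_left (h : TernaryQuasigroup f) (a b : A) :
    Function.Bijective fun z ↦ f z a b :=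
  (ternaryQuasigroup_iff_bijective.1 h).1 a b

theorem bijective_middle (h : TernaryQuasigroup f) (a b : A) :
    Function.Bijective fun z ↦ f a z b :=
  (ternaryQuasigroup_iff_bijective.1 h).2.1 a b

theorem bijective_right (h : TernaryQuasigroup f) (a b : A) :
    Function.Bijective fun z ↦ f a b z :=
  (ternaryQuasigroup_iff_bijective.1 h).2.2 a b

theorem exists_isSkew (h : TernaryQuasigroup f) : ∃ sk : A → A, IsSkew f sk := by
  choose sk hsk using fun a ↦ (h.bijective_middle a a).surjective a
  exact ⟨sk, hsk⟩

end TernaryQuasigroup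

namespace TernaryAssoc

variable {f : A → A → A → A}

theorem left_eq_middle_s3 (h : TernaryAssoc f) (a b c d e : A) :
    f (f a b c) d e = f a (f b c d) e :=
  (h a b c d e).1

theorem middle_eq_right_s3 (h : TernaryAssoc f) (a b c d e : A) :
    f a (f b c d) e = f a b (f c d e) :=
  (h a b c d e).2

theorem left_eq_right_s3 (h : TernaryAssoc f) (a b c d e : A) :
    f (f a b c) d e = f a b (f c d e) :=
  (h.left_eq_middle_s3 a b c d e).trans (h.middle_eq_right_s3 a b c d e)

theorem exchange_left (h : TernaryAssoc f) (hc : SemiComm f) (a b c d e : A) :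
    f (f a b c) d e = f (f a d c) b e := by
  rw [h.left_eq_middle_s3, hc b c d, ← h.left_eq_middle_s3]

theorem exchange_middle (h : TernaryAssoc f) (hc : SemiComm f) (a b c d e : A) :
    f a (f b c d) e = f a (f b e d) c := by
  rw [h.middle_eq_right_s3, hc c d e, ← h.middle_eq_right_s3]

end TernaryAssoc

theorem SemiComm.ternaryAssoc {f : A → A → A → A} (hc : SemiComm f)
    (h : ∀ a b c d e, f (f a b c) d e = f a (f b c d) e) : TernaryAssoc f := by
  refine fun a b c d e ↦ ⟨h a b c d e, ?_⟩
  calc f a (f b c d) e = f e (f d c b) a := by rw [hc a, hc b]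
    _ = f (f e d c) b a := (h e d c b a).symm
    _ = f a b (f c d e) := by rw [hc _ b a, hc e]

namespace TernaryGroup

variable {f : A → A → A → A} {sk : A → A}

theorem apply_skew_left (h : TernaryGroup f) (hsk : IsSkew f sk) (a x : A) :
    f a (sk a) x = x := by
  obtain ⟨y, rfl⟩ := (h.2.bijective_right a a).surjective x
  change f a (sk a) (f a a y) = f a a y
  rw [← h.1.left_eq_right_s3, hsk]

theorem skew_apply_left (h : TernaryGroup f) (hsk : IsSkew f sk) (a x : A) :
    f (sk a) a x = x := by
  apply (h.2.bijective_middle a a).injective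
  change f a (f (sk a) a x) a = f a x a
  rw [← h.1.left_eq_middle_s3, hsk]

theorem skew_apply_right (h : TernaryGroup f) (hsk : IsSkew f sk) (a x : A) :
    f x a (sk a) = x := by
  apply (h.2.bijective_middle a a).injective
  change f a (f x a (sk a)) a = f a x a
  rw [h.1.middle_eq_right_s3, hsk]

theorem a3L_iff (h : TernaryGroup f) : A3L f ↔ ∀ b c d, f b b d = f c c d := by
  have reduced : A3L f ↔ ∀ b c d, f c c d = f (f b c d) (f b c d) d := by
    simp only [A3L, h.1.left_eq_right_s3, (h.2.bijective_right _ _).injective.eq_iff]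
    exact ⟨fun H b ↦ H b b, fun H _ ↦ H⟩
  refine reduced.trans ⟨fun H b c d ↦ ?_, fun H b c d ↦ H _ _ _⟩
  obtain ⟨u, rfl⟩ := (h.2.bijective_left b d).surjective c
  exact H u b d

theorem a3R_iff (h : TernaryGroup f) : A3R f ↔ ∀ a b c, f a b b = f a c c := by
  have reduced : A3R f ↔ ∀ a b c, f a b b = f a (f a b c) (f a b c) := by
    simp only [A3R, ← h.1.left_eq_right_s3, (h.2.bijective_left _ _).injective.eq_iff]
    exact ⟨fun H a b c ↦ H a b c c, fun H a b c _ ↦ H a b c⟩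
  refine reduced.trans ⟨fun H a b c ↦ ?_, fun H a b c ↦ H _ _ _⟩
  obtain ⟨u, rfl⟩ := (h.2.bijective_right a b).surjective c
  exact H a b u

end TernaryGroup

/-- The exchange conditions (a1) and (a2) together with the identities `[abb] = ā` and
`[āax] = [xaā] = x`, for a given unary operation `sk a = ā`. -/
structure IsExchangeSkew (f : A → A → A → A) (sk : A → A) : Prop where
  exchange_left : ∀ a b c d e, f (f a b c) d e = f (f a d c) b e
  exchange_middle : ∀ a b c d e, f a (f b c d) e = f a (f b e d) c
  apply_self_right : ∀ a b, f a b b = sk a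
  skew_apply_left : ∀ a x, f (sk a) a x = x
  skew_apply_right : ∀ a x, f x a (sk a) = x

namespace KnotTheoretic

variable {f : A → A → A → A} {sk : A → A}

theorem semiComm (h : KnotTheoretic f) : SemiComm f := by
  obtain ⟨hgrp, hL, hR⟩ := h
  have left_const := hgrp.a3L_iff.1 hL
  have right_const := hgrp.a3R_iff.1 hR
  intro b c d
  apply (hgrp.2.bijective_middle (f b c d) b).injective
  calc f (f b c d) (f b c d) b = f (f b c c) (f b c c) b := left_const _ _ _
    _ = f (f b c c) (f c c b) b := by rw [(right_const b c b).trans (left_const b c b)]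
    _ = f b c (f (f c c c) b b) := by rw [hgrp.1.left_eq_right_s3, ← hgrp.1.left_eq_middle_s3]
    _ = f b c (f (f d d c) b b) := by rw [left_const c d c]
    _ = f (f b c d) (f d c b) b := by rw [hgrp.1.left_eq_middle_s3, ← hgrp.1.left_eq_right_s3]

theorem isExchangeSkew (h : KnotTheoretic f) (hsk : IsSkew f sk) : IsExchangeSkew f sk where
  exchange_left := h.1.1.exchange_left h.semiComm
  exchange_middle := h.1.1.exchange_middle h.semiComm
  apply_self_right a b :=
    calc f a b b = f a (sk a) (sk a) := h.1.a3R_iff.1 h.2.2 a b (sk a)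
      _ = sk a := h.1.apply_skew_left hsk a (sk a)
  skew_apply_left := h.1.skew_apply_left hsk
  skew_apply_right := h.1.skew_apply_right hsk

end KnotTheoretic

namespace IsExchangeSkew

variable {f : A → A → A → A} {sk : A → A}

theorem skew_involutive (h : IsExchangeSkew f sk) : Function.Involutive sk := fun a ↦ by
  rw [← h.apply_self_right (sk a) a, h.skew_apply_left]

theorem apply_skew_left (h : IsExchangeSkew f sk) (a x : A) : f a (sk a) x = x := by
  simpa only [h.skew_involutive a] using h.skew_apply_left (sk a) x

theorem apply_skew_right (h : IsExchangeSkew f sk) (a x : A) : f x (sk a) a = x := by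
  simpa only [h.skew_involutive a] using h.skew_apply_right (sk a) x

theorem apply_self_left (h : IsExchangeSkew f sk) (a b : A) : f a a b = sk b := by
  apply h.skew_involutive.injective
  calc sk (f a a b) = f (f a a b) b b := (h.apply_self_right _ b).symm
    _ = f (f a b b) a b := h.exchange_left a a b b b
    _ = b := by rw [h.apply_self_right, h.skew_apply_left]
    _ = sk (sk b) := (h.skew_involutive b).symm

theorem apply_skew_first (h : IsExchangeSkew f sk) (a b c : A) :
    f (sk a) b c = sk (f a b c) := by
  rw [← h.apply_self_right a c, h.exchange_left, h.apply_self_right]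

theorem semiComm (h : IsExchangeSkew f sk) : SemiComm f := by
  intro a b c
  apply h.skew_involutive.injective
  calc sk (f a b c) = f (f a b c) a a := (h.apply_self_right _ a).symm
    _ = f (f a a c) b a := h.exchange_left a b c a a
    _ = sk (f c b a) := by rw [h.apply_self_left, h.apply_skew_first]

theorem apply_apply_self (h : IsExchangeSkew f sk) (a b c d : A) :
    f (f a b c) c d = sk (f a b d) := by
  rw [h.exchange_left, h.apply_self_right, h.apply_skew_first]

theorem apply_skew_middle (h : IsExchangeSkew f sk) (a b c : A) :
    f a (sk b) c = sk (f a b c) := by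
  apply h.skew_involutive.injective
  rw [← h.apply_apply_self a (sk b) b c, h.apply_skew_right, h.skew_involutive]

theorem apply_apply_cancel_left (h : IsExchangeSkew f sk) (a b c : A) :
    f (f a b c) c b = a := by
  rw [h.apply_apply_self, h.apply_self_right, h.skew_involutive]

theorem apply_apply_cancel_middle (h : IsExchangeSkew f sk) (a b c : A) :
    f a (f a b c) c = b := by
  rw [h.exchange_middle, h.apply_self_right, h.apply_skew_left]

theorem apply_apply_cancel_right (h : IsExchangeSkew f sk) (a b c : A) :
    f a b (f b a c) = c := by
  rw [h.semiComm, h.semiComm b, h.apply_apply_cancel_left]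

theorem ternaryAssoc (h : IsExchangeSkew f sk) : TernaryAssoc f := by
  refine h.semiComm.ternaryAssoc fun a b c d e ↦ Eq.symm ?_
  calc f a (f b c d) e = f (f (f a b c) c b) (f b c d) e := by rw [h.apply_apply_cancel_left]
    _ = f (f (f a b c) (f b c d) b) c e := h.exchange_left _ _ _ _ _
    _ = f (f (f a b c) (sk d) c) c e := by rw [h.exchange_middle, h.apply_self_left]
    _ = f (f a b c) d e := by
      rw [h.apply_apply_self, h.apply_skew_middle, h.skew_involutive]

theorem ternaryQuasigroup (h : IsExchangeSkew f sk) : TernaryQuasigroup f := by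
  refine ternaryQuasigroup_iff_bijective.2 ⟨fun a b ↦ ?_, fun a b ↦ ?_, fun a b ↦ ?_⟩
  · exact Function.bijective_iff_has_inverse.2 ⟨fun z ↦ f z b a,
      fun z ↦ h.apply_apply_cancel_left z a b, fun z ↦ h.apply_apply_cancel_left z b a⟩
  · exact Function.Involutive.bijective fun z ↦ h.apply_apply_cancel_middle a z b
  · exact Function.bijective_iff_has_inverse.2 ⟨fun z ↦ f b a z,
      fun z ↦ h.apply_apply_cancel_right b a z, fun z ↦ h.apply_apply_cancel_right a b z⟩

theorem ternaryGroup (h : IsExchangeSkew f sk) : TernaryGroup f :=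
  ⟨h.ternaryAssoc, h.ternaryQuasigroup⟩

theorem knotTheoretic (h : IsExchangeSkew f sk) : KnotTheoretic f :=
  ⟨h.ternaryGroup,
    h.ternaryGroup.a3L_iff.2 fun b c d ↦
      (h.apply_self_left b d).trans (h.apply_self_left c d).symm,
    h.ternaryGroup.a3R_iff.2 fun a b c ↦
      (h.apply_self_right a b).trans (h.apply_self_right a c).symm⟩

end IsExchangeSkew

/-- A ternary groupoid is a knot-theoretic ternary group iff it satisfies
the exchange conditions (a1) and (a2), and there is a unary operation x ↦ x̄ with
[abb] = ā and [āax] = [xaā] = x. -/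
theorem stmt3 (f : A → A → A → A) :
    KnotTheoretic f ↔
    ((∀ a b c d e : A, f (f a b c) d e = f (f a d c) b e) ∧
     (∀ a b c d e : A, f a (f b c d) e = f a (f b e d) c) ∧
     ∃ sk : A → A, (∀ a b : A, f a b b = sk a) ∧
       ∀ a x : A, f (sk a) a x = x ∧ f x a (sk a) = x) := by
  constructor
  · intro h
    obtain ⟨sk, hsk⟩ := h.1.2.exists_isSkew
    have hex : IsExchangeSkew f sk := h.isExchangeSkew hsk
    exact ⟨hex.exchange_left, hex.exchange_middle, sk, hex.apply_self_right,
      fun a x ↦ ⟨hex.skew_apply_left a x, hex.skew_apply_right a x⟩⟩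
  · rintro ⟨exchange_left, exchange_middle, sk, apply_self_right, skew_apply⟩
    have hex : IsExchangeSkew f sk :=
      ⟨exchange_left, exchange_middle, apply_self_right,
        fun a x ↦ (skew_apply a x).1, fun a x ↦ (skew_apply a x).2⟩
    exact hex.knotTheoretic
end

section
/- Let (A,[ ]) be a semi-commutative ternary group such that [abb] = ā for all a,b ∈ A, where ā denotes the skew element of a. Then (A,[ ]) satisfies the conditions (A3L): [[abc]cd]=[[ab[bcd]][bcd]d] and (A3R): [ab[bcd]]=[a[abc][[abc]cd]] for all a,b,c,d ∈ A. -/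
variable {A : Type*}

section

variable {f : A → A → A → A}

namespace TernaryAssoc

theorem apply_left_eq_apply_right (hf : TernaryAssoc f) (a b c d e : A) :
    f (f a b c) d e = f a b (f c d e) :=
  (hf a b c d e).1.trans (hf a b c d e).2

theorem a3L_of_left_pair_eq (hf : TernaryAssoc f) (hleft : ∀ x y d : A, f x x d = f y y d) :
    A3L f := fun a b c d ↦
  calc
    f (f a b c) c d = f a b (f c c d) := hf.apply_left_eq_apply_right a b c c d
    _ = f a b (f (f b c d) (f b c d) d) := by rw [hleft c (f b c d) d]
    _ = f (f a b (f b c d)) (f b c d) d :=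
      (hf.apply_left_eq_apply_right a b (f b c d) (f b c d) d).symm

theorem a3R_of_right_pair_eq (hf : TernaryAssoc f) (hright : ∀ a x y : A, f a x x = f a y y) :
    A3R f := fun a b c d ↦
  calc
    f a b (f b c d) = f (f a b b) c d := (hf.apply_left_eq_apply_right a b b c d).symm
    _ = f (f a (f a b c) (f a b c)) c d := by rw [hright a b (f a b c)]
    _ = f a (f a b c) (f (f a b c) c d) :=
      hf.apply_left_eq_apply_right a (f a b c) (f a b c) c d

end TernaryAssoc

theorem SemiComm.left_pair_eq (hsc : SemiComm f) (hright : ∀ a x y : A, f a x x = f a y y)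
    (x y d : A) : f x x d = f y y d := by
  rw [hsc x x d, hright d x y, hsc d y y]

theorem stmt11_general (hf : TernaryAssoc f) (hleft : ∀ x y d : A, f x x d = f y y d)
    (hright : ∀ a x y : A, f a x x = f a y y) : A3L f ∧ A3R f :=
  ⟨hf.a3L_of_left_pair_eq hleft, hf.a3R_of_right_pair_eq hright⟩

end

/-- A semi-commutative ternary group satisfying [abb] = ā
satisfies (A3L) and (A3R). -/
theorem stmt11 (f : A → A → A → A) (hG : TernaryGroup f) (hsc : SemiComm f)
    (sk : A → A) (hsk : IsSkew f sk) (h23 : ∀ a b : A, f a b b = sk a) :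
    A3L f ∧ A3R f := by
  have hright (a x y : A) : f a x x = f a y y := (h23 a x).trans (h23 a y).symm
  exact stmt11_general hG.1 (hsc.left_pair_eq hright) hright
end

section
/- Let (A,[ ]) be a ternary group and define the derived ternary operation P(a,b,c) = [ab̄c], where b̄ denotes the skew element of b. Then (A,P) is a Mal'cev algebra (P(a,b,b) = P(b,b,a) = a for all a,b ∈ A) which satisfies the identities P(P(x,y,z),z,t) = P(x,y,t) and P(x,y,P(y,z,t)) = P(x,z,t) for all x,y,z,t ∈ A, and hence satisfies the conditions (A3L): P(P(a,b,c),c,d) = P(P(a,b,P(b,c,d)),P(b,c,d),d) and (A3R): P(a,b,P(b,c,d)) = P(a,P(a,b,c),P(P(a,b,c),c,d)) for all a,b,c,d ∈ A. -/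
variable {A : Type*}

/-!
In a ternary group every element has the form `[bbv]` and also the form `[vbb]`, so `[bb̄b] = b`
and associativity give `[bb̄a] = a = [ab̄b]`. These are the Mal'cev identities for
`P(a,b,c) = [ab̄c]`. As `P` inherits `P(P(a,b,c),d,e) = P(a,b,P(c,d,e))` from `[ ]`, it is a heap
operation. In a heap the middle variable of `P(P(x,y,z),z,t)` cancels, and this cancellation
reduces both sides of (A3L) to `P(a,b,d)`; (A3R) is dual.
-/

variable {f P : A → A → A → A} {sk : A → A}

/-- A Mal'cev operation. -/
def IsMalcev (P : A → A → A → A) : Prop :=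
  ∀ a b : A, P a b b = a ∧ P b b a = a

/-- A heap operation: a Mal'cev operation that is associative in its outer variables. Associativity
through the middle variable, `P (P a b c) d e = P a (P d c b) e`, follows and is not required. -/
structure IsHeap (P : A → A → A → A) : Prop where
  isMalcev : IsMalcev P
  assoc : ∀ a b c d e : A, P (P a b c) d e = P a b (P c d e)

/-- The operation `P(a,b,c) = [ab̄c]` derived from `f = [ ]`, where `sk b = b̄`. -/
def derivedOp (f : A → A → A → A) (sk : A → A) (a b c : A) : A :=
  f a (sk b) c

theorem IsHeap.apply_cancel_left (hP : IsHeap P) (x y z t : A) :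
    P (P x y z) z t = P x y t := by
  rw [hP.assoc, (hP.isMalcev t z).2]

theorem IsHeap.apply_cancel_right (hP : IsHeap P) (x y z t : A) :
    P x y (P y z t) = P x z t := by
  rw [← hP.assoc, (hP.isMalcev x y).1]

theorem A3L.of_apply_cancel_left (h : ∀ x y z t : A, P (P x y z) z t = P x y t) : A3L P :=
  fun a b c d => (h a b c d).trans (h a b (P b c d) d).symm

theorem A3R.of_apply_cancel_right (h : ∀ x y z t : A, P x y (P y z t) = P x z t) : A3R P :=
  fun a b c d => (h a b c d).trans (h a (P a b c) c d).symm

theorem TernaryAssoc.outer (hf : TernaryAssoc f) (a b c d e : A) :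
    f (f a b c) d e = f a b (f c d e) :=
  (hf a b c d e).1.trans (hf a b c d e).2

theorem TernaryGroup.apply_skew_left_s12 (hf : TernaryGroup f) {b s : A} (hs : f b s b = b) (a : A) :
    f b s a = a := by
  obtain ⟨hassoc, -, -, solve_right⟩ := hf
  obtain ⟨v, rfl⟩ := (solve_right b b a).exists
  rw [← hassoc.outer, hs]

theorem TernaryGroup.apply_skew_right (hf : TernaryGroup f) {b s : A} (hs : f b s b = b) (a : A) :
    f a s b = a := by
  obtain ⟨hassoc, solve_left, -⟩ := hf
  obtain ⟨v, rfl⟩ := (solve_left b b a).exists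
  rw [hassoc.outer, hs]

theorem TernaryGroup.isHeap_derivedOp (hf : TernaryGroup f) (hsk : IsSkew f sk) :
    IsHeap (derivedOp f sk) where
  isMalcev a b := ⟨hf.apply_skew_right (hsk b) a, hf.apply_skew_left_s12 (hsk b) a⟩
  assoc a b c d e := hf.1.outer a (sk b) c (sk d) e

/-- For a ternary group, the derived operation P(a,b,c) = [ab̄c] is a
Mal'cev operation satisfying P(P(x,y,z),z,t) = P(x,y,t) and P(x,y,P(y,z,t)) = P(x,z,t),
and hence the (A3L) and (A3R) conditions. -/
theorem stmt12 (f : A → A → A → A) (hG : TernaryGroup f)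
    (sk : A → A) (hsk : IsSkew f sk) :
    (∀ a b : A, f a (sk b) b = a ∧ f b (sk b) a = a) ∧
    (∀ x y z t : A, f (f x (sk y) z) (sk z) t = f x (sk y) t) ∧
    (∀ x y z t : A, f x (sk y) (f y (sk z) t) = f x (sk z) t) ∧
    A3L (fun a b c => f a (sk b) c) ∧ A3R (fun a b c => f a (sk b) c) := by
  have hP : IsHeap (derivedOp f sk) := hG.isHeap_derivedOp hsk
  exact ⟨hP.isMalcev, hP.apply_cancel_left, hP.apply_cancel_right,
    .of_apply_cancel_left hP.apply_cancel_left, .of_apply_cancel_right hP.apply_cancel_right⟩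
end

section
/- Let (A,[ ]) be a semi-commutative ternary group and define P(a,b,c) = [ab̄c], where b̄ denotes the skew element of b. Then (A,P) is a Mal'cev ternary group, i.e., (A,P) is an associative ternary quasigroup satisfying P(a,b,b) = P(b,b,a) = a for all a,b ∈ A. -/
variable {A : Type*}

/-!
Write `b̄` for the skew element of `b`. In any ternary group `[b b̄ x] = x = [x b b̄] = [x b̄ b]`.
Hence `b ↦ b̄` is an involution, and it sends `[abc]` to `[c̄ b̄ ā]`; semi-commutativity turns it
into an automorphism. Twisting the middle argument of a ternary group by an involutive automorphism
`s` gives again a ternary group, because `s [b (s c) d] = [(s b) c (s d)]` reduces associativity of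
the twist to that of the original operation.
-/

section Twist

variable {f : A → A → A → A} {s : A → A}

theorem TernaryAssoc.comp_middle (hf : TernaryAssoc f) (hs : Function.Involutive s)
    (hmap : ∀ a b c, s (f a b c) = f (s a) (s b) (s c)) :
    TernaryAssoc (fun a b c => f a (s b) c) := by
  intro a b c d e
  have hinner : s (f b (s c) d) = f (s b) c (s d) := by rw [hmap, hs]
  simp only [hinner]
  exact hf a (s b) c (s d) e

theorem TernaryQuasigroup.comp_middle (hf : TernaryQuasigroup f) (hs : Function.Bijective s) :
    TernaryQuasigroup (fun a b c => f a (s b) c) :=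
  ⟨fun a b c => hf.1 (s a) b c,
    fun a b c => hs.existsUnique_iff.mp (hf.2.1 a b c),
    fun a b c => hf.2.2 a (s b) c⟩

theorem TernaryGroup.comp_middle (hf : TernaryGroup f) (hs : Function.Involutive s)
    (hmap : ∀ a b c, s (f a b c) = f (s a) (s b) (s c)) :
    TernaryGroup (fun a b c => f a (s b) c) :=
  ⟨hf.1.comp_middle hs hmap, hf.2.comp_middle hs.bijective⟩

end Twist

namespace TernaryGroup

variable {f : A → A → A → A} {sk : A → A}

theorem op_op_left (hf : TernaryGroup f) (a b c d e : A) :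
    f (f a b c) d e = f a (f b c d) e :=
  (hf.1 a b c d e).1

theorem op_op_middle (hf : TernaryGroup f) (a b c d e : A) :
    f a (f b c d) e = f a b (f c d e) :=
  (hf.1 a b c d e).2

theorem op_skew_self (hf : TernaryGroup f) (hsk : IsSkew f sk) (x b : A) :
    f x (sk b) b = x := by
  obtain ⟨u, rfl, -⟩ := hf.2.1 b b x
  rw [hf.op_op_left, hf.op_op_middle, hsk]

theorem self_skew_op (hf : TernaryGroup f) (hsk : IsSkew f sk) (b x : A) :
    f b (sk b) x = x := by
  obtain ⟨u, rfl, -⟩ := hf.2.2.2 b b x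
  rw [← hf.op_op_middle, ← hf.op_op_left, hsk]

theorem op_self_skew (hf : TernaryGroup f) (hsk : IsSkew f sk) (x b : A) :
    f x b (sk b) = x := by
  have hcancel : f (f x b (sk b)) b b = f x b b := by rw [hf.op_op_left, hsk]
  exact (hf.2.1 b b (f x b b)).unique hcancel rfl

theorem skew_eq_of_op_eq (hf : TernaryGroup f) (hsk : IsSkew f sk) {a z : A}
    (h : f a z a = a) : sk a = z :=
  (hf.2.2.1 a a a).unique (hsk a) h

theorem skew_involutive (hf : TernaryGroup f) (hsk : IsSkew f sk) :
    Function.Involutive sk :=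
  fun a => hf.skew_eq_of_op_eq hsk (hf.op_self_skew hsk (sk a) a)

theorem skew_op_rev (hf : TernaryGroup f) (hsk : IsSkew f sk) (a b c : A) :
    sk (f a b c) = f (sk c) (sk b) (sk a) := by
  have hcancel : f (f a b c) (sk c) (sk b) = a := by
    rw [hf.op_op_left, hf.op_self_skew hsk, hf.op_self_skew hsk]
  apply hf.skew_eq_of_op_eq hsk
  rw [← hf.op_op_left, hcancel, hf.self_skew_op hsk]

theorem skew_op (hf : TernaryGroup f) (hsc : SemiComm f) (hsk : IsSkew f sk) (a b c : A) :
    sk (f a b c) = f (sk a) (sk b) (sk c) := by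
  rw [hf.skew_op_rev hsk, hsc]

end TernaryGroup

/-- For a semi-commutative ternary group, the derived operation
P(a,b,c) = [ab̄c] makes A a Mal'cev ternary group. -/
theorem stmt14 (f : A → A → A → A) (hG : TernaryGroup f) (hsc : SemiComm f)
    (sk : A → A) (hsk : IsSkew f sk) :
    TernaryGroup (fun a b c => f a (sk b) c) ∧
    (∀ a b : A, f a (sk b) b = a ∧ f b (sk b) a = a) :=
  ⟨hG.comp_middle (hG.skew_involutive hsk) (hG.skew_op hsc hsk),
    fun a b => ⟨hG.op_skew_self hsk a b, hG.self_skew_op hsk b a⟩⟩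
end

section
/- Let (A,[ ]) be a semi-commutative, (1,2)-associative ternary groupoid, and suppose there exists a unary operation x ↦ x̄ on A such that [abb] = ā and [āab] = b for all a,b ∈ A. Then (A,[ ]) is a knot-theoretic ternary group. -/
variable {A : Type*}

/-!
Write `R u v` for the right translation `x ↦ [xuv]`, so that (1,2)-associativity reads
`R d e ∘ R b c = R [bcd] e`. The map `x ↦ [xuu] = x̄` is an involution, because
`b = [b̄bb]` is the skew of `b̄`; applying it to `[ab̄b]` gives `[a[b̄ba]a] = [aaa] = ā`, so that
`[ab̄b] = a`. Hence `R c b` is a left inverse of `R b̄ c̄`. Cancelling an injective `R u v` from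
`[[a[bcd]e]uv] = [a[[bcd]eu]v] = [a[b[cde]u]v] = [[ab[cde]]uv]` yields full associativity.
The pairs `a, ā` and `ā, a` are then neutral on both sides, which solves every equation. Finally,
(A3L) and (A3R) both hold because `[abb]` does not depend on `b`.
-/

section

variable {f : A → A → A → A} {sk : A → A}

theorem assoc_middle_right_of_injective
    (h12 : ∀ a b c d e : A, f (f a b c) d e = f a (f b c d) e) {u v : A}
    (huv : Function.Injective fun x => f x u v) (a b c d e : A) :
    f a (f b c d) e = f a b (f c d e) :=
  huv <| calc
    f (f a (f b c d) e) u v = f a (f (f b c d) e u) v := h12 ..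
    _ = f a (f b (f c d e) u) v := by rw [h12 b]
    _ = f (f a b (f c d e)) u v := (h12 ..).symm

theorem skew_involutive_of_neutral (hl : ∀ a b : A, f (sk a) a b = b)
    (hr : ∀ a b : A, f a (sk b) b = a) : Function.Involutive sk := fun a =>
  (hr (sk (sk a)) a).symm.trans (hl (sk a) a)

theorem TernaryAssoc.ternaryQuasigroup_of_neutral (hf : TernaryAssoc f)
    (hl : ∀ a b : A, f (sk a) a b = b) (hr : ∀ a b : A, f a (sk b) b = a) :
    TernaryQuasigroup f := by
  have h12 a b c d e := (hf a b c d e).1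
  have h23 a b c d e := (hf a b c d e).2
  have hsk := skew_involutive_of_neutral hl hr
  have hl' (a b : A) : f a (sk a) b = b := by simpa only [hsk a] using hl (sk a) b
  have hr' (a b : A) : f a b (sk b) = a := by simpa only [hsk b] using hr a (sk b)
  refine ⟨fun a b c => ⟨f c (sk b) (sk a), ?_, ?_⟩, fun a b c => ⟨f (sk a) c (sk b), ?_, ?_⟩,
    fun a b c => ⟨f (sk b) (sk a) c, ?_, ?_⟩⟩ <;> beta_reduce
  · rw [h12, h23, hl, hr]
  · rintro z rfl
    rw [h12, hr', hr']
  · rw [← h12, hl', hr]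
  · rintro z rfl
    rw [← h12, hl, hr']
  · rw [← h23, hl', hl']
  · rintro z rfl
    rw [← h23, hl, hl]

theorem a3L_of_apply_self_right
    (h12 : ∀ a b c d e : A, f (f a b c) d e = f a (f b c d) e)
    (hsk : ∀ a b : A, f a b b = sk a) : A3L f := fun a b c d => calc
  f (f a b c) c d = f a (sk b) d := by rw [h12, hsk]
  _ = f (f a b (f b c d)) (f b c d) d := by rw [h12 a b, hsk]

theorem a3R_of_apply_self_right
    (h13 : ∀ a b c d e : A, f (f a b c) d e = f a b (f c d e))
    (hsk : ∀ a b : A, f a b b = sk a) : A3R f := fun a b c d => calc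
  f a b (f b c d) = f (sk a) c d := by rw [← h13, hsk]
  _ = f a (f a b c) (f (f a b c) c d) := by rw [← h13 a, hsk]

theorem right_neutral_of_apply_self_right
    (h12 : ∀ a b c d e : A, f (f a b c) d e = f a (f b c d) e)
    (hsk : ∀ a b : A, f a b b = sk a) (hl : ∀ a b : A, f (sk a) a b = b) (a b : A) :
    f a (sk b) b = a := by
  have sk_sk : Function.Involutive sk := fun x => (hsk (sk x) x).symm.trans (hl x x)
  refine sk_sk.injective ?_
  calc
    sk (f a (sk b) b) = f (f a (sk b) b) a a := (hsk ..).symm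
    _ = f a (f (sk b) b a) a := h12 ..
    _ = sk a := by rw [hl, hsk]

theorem injective_apply_skew_skew
    (h12 : ∀ a b c d e : A, f (f a b c) d e = f a (f b c d) e)
    (hr : ∀ a b : A, f a (sk b) b = a) (b c : A) :
    Function.Injective fun x => f x (sk b) (sk c) :=
  Function.LeftInverse.injective (g := fun x => f x c b) fun x => by
    beta_reduce
    rw [h12, hr, hr]

end

theorem stmt18_general (f : A → A → A → A)
    (h12 : ∀ a b c d e : A, f (f a b c) d e = f a (f b c d) e)
    (sk : A → A) (hsk : ∀ a b : A, f a b b = sk a)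
    (hl : ∀ a b : A, f (sk a) a b = b) :
    KnotTheoretic f := by
  have hr := right_neutral_of_apply_self_right h12 hsk hl
  have hassoc : TernaryAssoc f := fun a b c d e =>
    ⟨h12 a b c d e,
      assoc_middle_right_of_injective h12 (injective_apply_skew_skew h12 hr a a) a b c d e⟩
  have h13 a b c d e := (hassoc a b c d e).1.trans (hassoc a b c d e).2
  exact ⟨⟨hassoc, hassoc.ternaryQuasigroup_of_neutral hl hr⟩,
    a3L_of_apply_self_right h12 hsk, a3R_of_apply_self_right h13 hsk⟩

/-- A semi-commutative, (1,2)-associative ternary groupoid with a unary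
operation x ↦ x̄ satisfying [abb] = ā and [āab] = b is a knot-theoretic ternary group. -/
theorem stmt18 (f : A → A → A → A) (hsc : SemiComm f)
    (h12 : ∀ a b c d e : A, f (f a b c) d e = f a (f b c d) e)
    (sk : A → A) (h23 : ∀ a b : A, f a b b = sk a)
    (h3 : ∀ a b : A, f (sk a) a b = b) :
    KnotTheoretic f :=
  stmt18_general f h12 sk h23 h3
end

section
/- In a semi-commutative ternary groupoid (A,[ ]), the condition (A3L): [[abc]cd]=[[ab[bcd]][bcd]d] for all a,b,c,d ∈ A holds if and only if the condition (A3R): [ab[bcd]]=[a[abc][[abc]cd]] for all a,b,c,d ∈ A holds. -/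
variable {A : Type*}

/-- The opposite of a ternary operation, reading its arguments from right to left. It exchanges
(A3L) with (A3R), and the semi-commutative operations are those equal to their opposite. -/
def ternaryOpposite (f : A → A → A → A) : A → A → A → A :=
  fun a b c => f c b a

theorem a3L_ternaryOpposite_iff {f : A → A → A → A} : A3L (ternaryOpposite f) ↔ A3R f :=
  ⟨fun h a b c d => h d c b a, fun h a b c d => h d c b a⟩

theorem SemiComm.ternaryOpposite_eq {f : A → A → A → A} (hf : SemiComm f) :
    ternaryOpposite f = f :=
  funext₃ fun a b c => hf c b a

/-- In a semi-commutative ternary groupoid, (A3L) holds iff (A3R) holds. -/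
theorem stmt19 (f : A → A → A → A) (hsc : SemiComm f) :
    A3L f ↔ A3R f := by
  rw [← a3L_ternaryOpposite_iff, hsc.ternaryOpposite_eq]
end
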